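/- arXiv:2102.12571 — 3 statements merged into one kernel-verified Lean document; each statement's English description precedes it below -/
import Mathlib

section
/- For a finite MDP with discount factor 0 ≤ γ < 1, there exists a deterministic policy π : S → A whose value function V^π (the unique fixed point of T_π) equals the optimal value function V* (the unique fixed point of the Bellman optimality operator T). -/
open Finset

/-- The Bellman optimality operator of a finite MDP. -/
noncomputable def bellman {S A : Type*} [Fintype S] [Fintype A] [Nonempty A]
    (R : S → A → ℝ) (P : S → A → S → ℝ) (γ : ℝ) (V : S → ℝ) (s : S) : ℝ :=
  univ.sup' univ_nonempty fun a => R s a + γ * ∑ s', P s a s' * V s'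

/-- The policy evaluation operator of a finite MDP for a deterministic policy π. -/
noncomputable def policyEval {S A : Type*} [Fintype S]
    (R : S → A → ℝ) (P : S → A → S → ℝ) (γ : ℝ) (π : S → A) (V : S → ℝ) (s : S) : ℝ :=
  R s (π s) + γ * ∑ s', P s (π s) s' * V s'

/-- There exists a deterministic policy whose value function equals the optimal value
function. -/
theorem exists_optimal_policy {S A : Type*} [Fintype S] [Nonempty S] [Fintype A] [Nonempty A]
    (R : S → A → ℝ) (P : S → A → S → ℝ) (γ : ℝ)
    (hP0 : ∀ s a s', 0 ≤ P s a s') (hP1 : ∀ s a, ∑ s', P s a s' = 1)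
    (hγ0 : 0 ≤ γ) (hγ1 : γ < 1)
    (Vstar : S → ℝ) (hfixstar : ∀ s, bellman R P γ Vstar s = Vstar s) :
    ∃ (π : S → A) (Vpi : S → ℝ),
      (∀ s, policyEval R P γ π Vpi s = Vpi s) ∧ ∀ s, Vpi s = Vstar s := by
  have h : ∀ s, ∃ a, R s a + γ * ∑ s', P s a s' * Vstar s' = Vstar s := by
    intro s
    obtain ⟨a, _, ha⟩ := Finset.exists_mem_eq_sup' (univ_nonempty (α := A))
      (fun a => R s a + γ * ∑ s', P s a s' * Vstar s')
    exact ⟨a, ha.symm.trans (hfixstar s)⟩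
  choose π hπ using h
  exact ⟨π, Vstar, hπ, fun _ => rfl⟩
end

section
/- Policy improvement: for a finite MDP with discount factor 0 ≤ γ < 1 and deterministic policies π, π' : S → A, if (T_{π'} V^π) s ≥ V^π s for all s ∈ S, then V^{π'} s ≥ V^π s for all s ∈ S, where V^π and V^{π'} are the unique fixed points of the policy evaluation operators T_π and T_{π'} respectively. -/
open Finset

/-- Policy improvement: if applying π' 's evaluation operator to V^π improves on V^π
pointwise, then V^{π'} dominates V^π pointwise. -/
theorem policy_improvement {S A : Type*} [Fintype S] [Nonempty S] [Fintype A] [Nonempty A]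
    (R : S → A → ℝ) (P : S → A → S → ℝ) (γ : ℝ) (π π' : S → A)
    (hP0 : ∀ s a s', 0 ≤ P s a s') (hP1 : ∀ s a, ∑ s', P s a s' = 1)
    (hγ0 : 0 ≤ γ) (hγ1 : γ < 1)
    (Vpi : S → ℝ) (hfixpi : ∀ s, policyEval R P γ π Vpi s = Vpi s)
    (Vpi' : S → ℝ) (hfixpi' : ∀ s, policyEval R P γ π' Vpi' s = Vpi' s)
    (himp : ∀ s, Vpi s ≤ policyEval R P γ π' Vpi s) :
    ∀ s, Vpi s ≤ Vpi' s := by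
  obtain ⟨s0, h0⟩ := Finite.exists_max (fun s => Vpi s - Vpi' s)
  have h1 := himp s0
  have h2 := hfixpi' s0
  unfold policyEval at h1 h2
  have h3 : ∑ s', P s0 (π' s0) s' * Vpi s' - ∑ s', P s0 (π' s0) s' * Vpi' s'
      ≤ Vpi s0 - Vpi' s0 := by
    calc _ = ∑ s', P s0 (π' s0) s' * (Vpi s' - Vpi' s') := by
          rw [← Finset.sum_sub_distrib]
          exact Finset.sum_congr rfl fun _ _ => by ring
      _ ≤ ∑ s', P s0 (π' s0) s' * (Vpi s0 - Vpi' s0) :=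
          Finset.sum_le_sum fun s' _ => mul_le_mul_of_nonneg_left (h0 s') (hP0 _ _ _)
      _ = _ := by rw [← Finset.sum_mul, hP1, one_mul]
  have h4 := mul_le_mul_of_nonneg_left h3 hγ0
  have h5 : Vpi s0 - Vpi' s0 ≤ 0 := by
    by_contra hc
    nlinarith
  intro s
  have h6 : Vpi s - Vpi' s ≤ Vpi s0 - Vpi' s0 := h0 s
  linarith
end

section
/- Logical Value Iteration converges: let F (FSA states), S (environment states), O (options), and E (event-proposition valuations) be nonempty finite sets; let R_F : F → ℝ and R_o : O → S → ℝ be reward models; let q : E → ℝ with q e ≥ 0 and ∑_e q e = 1; let T_F : F → S → E → F → ℝ with T_F f s' e f' ≥ 0 and ∑_{f'} T_F f s' e f' = 1 for all f, s', e; and let T : O → S → S → ℝ with T o s s' ≥ 0 and ∑_{s'} T o s s' ≤ γ for all o, s, where 0 ≤ γ < 1. Then the Logical Value Iteration operator L mapping V : F × S → ℝ to (L V)(f, s) = max_{o ∈ O} (R_F f * R_o o s + ∑_{f' ∈ F} ∑_{e ∈ E} ∑_{s' ∈ S} T_F f s' e f' * q e * T o s s' * V (f', s')) is γ-Lipschitz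 in the sup norm on F × S → ℝ, and hence has a unique fixed point to which its iterates converge from any initialization. -/
open Finset

/-- The Logical Value Iteration operator on the hierarchical SMDP that is the product of
a logical FSA (states `F`) and a low-level environment (states `S`), with options `O`
and event-proposition valuations `E`. -/
noncomputable def lviOperator {F S O E : Type*} [Fintype F] [Fintype S] [Fintype E]
    [Fintype O] [Nonempty O]
    (RF : F → ℝ) (Ro : O → S → ℝ) (q : E → ℝ)
    (TF : F → S → E → F → ℝ) (T : O → S → S → ℝ)
    (V : F × S → ℝ) (x : F × S) : ℝ :=
  univ.sup' univ_nonempty fun o =>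
    RF x.1 * Ro o x.2 +
      ∑ f', ∑ e, ∑ s', TF x.1 s' e f' * q e * T o x.2 s' * V (f', s')

theorem lvi_aux {F S O E : Type*} [Fintype F] [Fintype S]
    [Fintype O] [Nonempty O] [Fintype E]
    (RF : F → ℝ) (Ro : O → S → ℝ) (q : E → ℝ)
    (TF : F → S → E → F → ℝ) (T : O → S → S → ℝ) (γ : ℝ)
    (hq0 : ∀ e, 0 ≤ q e) (hq1 : ∑ e, q e = 1)
    (hTF0 : ∀ f s' e f', 0 ≤ TF f s' e f') (hTF1 : ∀ f s' e, ∑ f', TF f s' e f' = 1)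
    (hT0 : ∀ o s s', 0 ≤ T o s s') (hT1 : ∀ o s, ∑ s', T o s s' ≤ γ)
    (V W : F × S → ℝ) (C : ℝ) (hC0 : 0 ≤ C) (hC : ∀ y, V y ≤ W y + C) (x : F × S) :
    lviOperator RF Ro q TF T V x ≤ lviOperator RF Ro q TF T W x + γ * C := by
  unfold lviOperator
  apply Finset.sup'_le
  intro o _
  have h1 := Finset.le_sup' (fun o => RF x.1 * Ro o x.2 +
      ∑ f', ∑ e, ∑ s', TF x.1 s' e f' * q e * T o x.2 s' * W (f', s')) (Finset.mem_univ o)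
  have h2 : ∑ f', ∑ e, ∑ s', TF x.1 s' e f' * q e * T o x.2 s' * V (f', s') ≤
      ∑ f', ∑ e, ∑ s', (TF x.1 s' e f' * q e * T o x.2 s' * W (f', s')
        + TF x.1 s' e f' * q e * T o x.2 s' * C) := by
    refine Finset.sum_le_sum fun f' _ => Finset.sum_le_sum fun e _ =>
      Finset.sum_le_sum fun s' _ => ?_
    rw [← mul_add]
    exact mul_le_mul_of_nonneg_left (hC _)
      (mul_nonneg (mul_nonneg (hTF0 _ _ _ _) (hq0 _)) (hT0 _ _ _))
  simp only [Finset.sum_add_distrib] at h2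
  have h3 : ∑ f', ∑ e, ∑ s', TF x.1 s' e f' * q e * T o x.2 s' * C
      = (∑ s', T o x.2 s') * C := by
    rw [Finset.sum_comm]
    have : ∀ e, ∑ f', ∑ s', TF x.1 s' e f' * q e * T o x.2 s' * C
        = q e * ((∑ s', T o x.2 s') * C) := by
      intro e
      rw [Finset.sum_comm, Finset.sum_mul, Finset.mul_sum]
      refine Finset.sum_congr rfl fun s' _ => ?_
      rw [← Finset.sum_mul, ← Finset.sum_mul, ← Finset.sum_mul, hTF1]
      ring
    simp only [this]
    rw [← Finset.sum_mul, hq1, one_mul]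
  have h4 := mul_le_mul_of_nonneg_right (hT1 o x.2) hC0
  linarith

/-- Logical Value Iteration converges: the operator is a γ-contraction in the sup norm,
hence has a unique fixed point to which its iterates converge from any initialization. -/
theorem lvi_converges {F S O E : Type*} [Fintype F] [Nonempty F] [Fintype S] [Nonempty S]
    [Fintype O] [Nonempty O] [Fintype E] [Nonempty E]
    (RF : F → ℝ) (Ro : O → S → ℝ) (q : E → ℝ)
    (TF : F → S → E → F → ℝ) (T : O → S → S → ℝ) (γ : ℝ)
    (hγ0 : 0 ≤ γ) (hγ1 : γ < 1)
    (hq0 : ∀ e, 0 ≤ q e) (hq1 : ∑ e, q e = 1)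
    (hTF0 : ∀ f s' e f', 0 ≤ TF f s' e f') (hTF1 : ∀ f s' e, ∑ f', TF f s' e f' = 1)
    (hT0 : ∀ o s s', 0 ≤ T o s s') (hT1 : ∀ o s, ∑ s', T o s s' ≤ γ) :
    (∀ V W : F × S → ℝ,
      (univ.sup' univ_nonempty fun x : F × S =>
          |lviOperator RF Ro q TF T V x - lviOperator RF Ro q TF T W x|) ≤
        γ * univ.sup' univ_nonempty fun x : F × S => |V x - W x|) ∧
    (∃ Vstar : F × S → ℝ, (∀ x, lviOperator RF Ro q TF T Vstar x = Vstar x) ∧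
      (∀ V : F × S → ℝ, (∀ x, lviOperator RF Ro q TF T V x = V x) → V = Vstar) ∧
      (∀ V₀ : F × S → ℝ,
        Filter.Tendsto (fun n => (lviOperator RF Ro q TF T)^[n] V₀)
          Filter.atTop (nhds Vstar))) := by
  have key : ∀ (V W : F × S → ℝ) (C : ℝ), 0 ≤ C → (∀ y, |V y - W y| ≤ C) → ∀ x,
      |lviOperator RF Ro q TF T V x - lviOperator RF Ro q TF T W x| ≤ γ * C := by
    intro V W C hC0 hC x
    have a := lvi_aux RF Ro q TF T γ hq0 hq1 hTF0 hTF1 hT0 hT1 V W C hC0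
      (fun y => by linarith [(abs_le.1 (hC y)).2]) x
    have b := lvi_aux RF Ro q TF T γ hq0 hq1 hTF0 hTF1 hT0 hT1 W V C hC0
      (fun y => by linarith [(abs_le.1 (hC y)).1]) x
    rw [abs_le]
    constructor <;> linarith
  refine ⟨fun V W => ?_, ?_⟩
  · have hle : ∀ y : F × S, |V y - W y| ≤
        univ.sup' univ_nonempty fun x : F × S => |V x - W x| := fun y =>
      Finset.le_sup' (fun x : F × S => |V x - W x|) (Finset.mem_univ y)
    apply Finset.sup'_le
    intro x _
    exact key V W _ ((abs_nonneg _).trans (hle x)) hle x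
  · have hc : ContractingWith ⟨γ, hγ0⟩ (lviOperator RF Ro q TF T) := by
      refine ⟨by exact_mod_cast hγ1, LipschitzWith.of_dist_le_mul fun V W => ?_⟩
      refine (dist_pi_le_iff (mul_nonneg hγ0 dist_nonneg)).2 fun x => ?_
      rw [Real.dist_eq]
      exact key V W _ dist_nonneg (fun y => by
        rw [← Real.dist_eq]; exact dist_le_pi_dist V W y) x
    refine ⟨hc.fixedPoint, fun x => congrFun hc.fixedPoint_isFixedPt x,
      fun V hV => hc.fixedPoint_unique (funext hV), fun V₀ => hc.tendsto_iterate_fixedPoint V₀⟩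
end
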